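/- arXiv:1608.00510 — 4 statements merged into one kernel-verified Lean document; each statement's English description precedes it below -/
import Mathlib

section
/- Let W₁ be a group, τ a group automorphism of W₁, and r ≥ 1. Let δ be the automorphism of the direct power W₁^r (functions Fin r → W₁ with pointwise multiplication) defined by (δ w)(i) = w(i+1) for i < r − 1 and (δ w)(r − 1) = τ(w(0)). For a group H with automorphism σ, say u, v ∈ H are σ-twisted conjugate if there exists x ∈ H with v = x * u * (σ x)⁻¹; this is an equivalence relation. Then the map sending w ∈ W₁^r to the product w(0) * w(1) * ⋯ * w(r − 1) induces a well-defined bijection from the set of δ-twisted conjugacy classes of W₁^r onto the set of τ-twisted conjugacy classes of W₁. -/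
/-- `u` and `v` are `σ`-twisted conjugate if `v = x * u * (σ x)⁻¹` for some `x`. -/
def TwistedConj {H : Type*} [Group H] (σ : H → H) (u v : H) : Prop :=
  ∃ x : H, v = x * u * (σ x)⁻¹

theorem TwistedConj.equivalence {H : Type*} [Group H] (σ : H ≃* H) :
    Equivalence (TwistedConj (σ : H → H)) where
  refl u := ⟨1, by simp⟩
  symm := by
    rintro u v ⟨x, rfl⟩
    exact ⟨x⁻¹, by simp [mul_assoc]⟩
  trans := by
    rintro u v w ⟨x, rfl⟩ ⟨y, rfl⟩
    exact ⟨y * x, by simp [mul_assoc]⟩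

theorem Fin.partialProd_last {M : Type*} [Monoid M] {n : ℕ} (f : Fin n → M) :
    Fin.partialProd f (Fin.last n) = (List.ofFn f).prod := by
  simp [Fin.partialProd, List.take_of_length_le]

/-- Telescoping: two sequences are related by `v i = y i * w i * (y (i + 1))⁻¹` exactly when
their partial products are related by `y 0` on the left and `y j` on the right. -/
theorem Fin.partialProd_eq_iff_telescope {G : Type*} [Group G] {n : ℕ} (v w : Fin n → G)
    (y : Fin (n + 1) → G) :
    (∀ j, Fin.partialProd v j = y 0 * Fin.partialProd w j * (y j)⁻¹) ↔
      ∀ i : Fin n, v i = y i.castSucc * w i * (y i.succ)⁻¹ := by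
  refine ⟨fun h i => ?_, fun h j => ?_⟩
  · have hi := h i.succ
    rw [Fin.partialProd_succ, Fin.partialProd_succ, h i.castSucc] at hi
    apply mul_left_cancel (a := y 0 * Fin.partialProd w i.castSucc * (y i.castSucc)⁻¹)
    rw [hi]
    group
  · induction j using Fin.induction with
    | zero => simp
    | succ i ih =>
      rw [Fin.partialProd_succ, Fin.partialProd_succ, ih, h i]
      group

section CyclicTwist

variable {G : Type*} [Group G] (τ : G → G) {n : ℕ} (δ : (Fin (n + 1) → G) → (Fin (n + 1) → G))

/-- Twisted conjugacy by a cyclic twist is detected by the product of the entries. -/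
theorem twistedConj_cyclic_iff
    (hδ : ∀ x i, δ x i = (Fin.snoc x (τ (x 0)) : Fin (n + 2) → G) i.succ)
    (w v : Fin (n + 1) → G) :
    TwistedConj δ w v ↔ TwistedConj τ (List.ofFn w).prod (List.ofFn v).prod := by
  constructor
  · rintro ⟨x, hx⟩
    have h := (Fin.partialProd_eq_iff_telescope v w (Fin.snoc x (τ (x 0)))).2 (fun i => by
      rw [hx, Fin.snoc_castSucc, ← hδ]
      rfl) (Fin.last _)
    rw [Fin.partialProd_last, Fin.partialProd_last, Fin.snoc_last,
      Fin.snoc_apply_zero] at h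
    exact ⟨x 0, h⟩
  · rintro ⟨g, hg⟩
    let y : Fin (n + 2) → G := fun j => (Fin.partialProd v j)⁻¹ * g * Fin.partialProd w j
    have hy0 : y 0 = g := by simp [y]
    have hlast : y (Fin.last _) = τ g := by
      simp only [y, Fin.partialProd_last, hg]
      group
    have hsnoc : (Fin.snoc (fun i => y i.castSucc) (τ g) : Fin (n + 2) → G) = y := by
      rw [← hlast]
      exact Fin.snoc_init_self y
    have h := (Fin.partialProd_eq_iff_telescope v w y).1 (fun j => by
      rw [hy0]
      simp only [y]
      group)
    refine ⟨fun i => y i.castSucc, funext fun i => ?_⟩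
    have hδi : δ (fun i => y i.castSucc) i = y i.succ := by
      rw [hδ, Fin.castSucc_zero, hy0, hsnoc]
    rw [Pi.mul_apply, Pi.mul_apply, Pi.inv_apply, hδi, h i]

end CyclicTwist

/-- Twisted conjugacy classes of a direct power, with cyclically permuting twisting,
biject with twisted conjugacy classes of the single factor, via the product map. -/
theorem stmt_1 {W₁ : Type*} [Group W₁] (τ : W₁ ≃* W₁) (r : ℕ) (hr : 1 ≤ r)
    (δ : (Fin r → W₁) ≃* (Fin r → W₁))
    (hδ : ∀ (w : Fin r → W₁) (i : Fin r),
      δ w i = if h : (i : ℕ) + 1 < r then w ⟨(i : ℕ) + 1, h⟩ else τ (w ⟨0, by omega⟩)) :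
    Equivalence (TwistedConj (δ : (Fin r → W₁) → (Fin r → W₁))) ∧
    Equivalence (TwistedConj (τ : W₁ → W₁)) ∧
    ∃ e : Quot (TwistedConj (δ : (Fin r → W₁) → (Fin r → W₁))) ≃
        Quot (TwistedConj (τ : W₁ → W₁)),
      ∀ w : Fin r → W₁, e (Quot.mk _ w) = Quot.mk _ (List.ofFn w).prod := by
  refine ⟨TwistedConj.equivalence δ, TwistedConj.equivalence τ, ?_⟩
  obtain ⟨n, rfl⟩ : ∃ n, r = n + 1 := ⟨r - 1, by omega⟩
  have key := twistedConj_cyclic_iff τ δ (fun x i => by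
    rw [hδ]
    simp [Fin.snoc]
    rfl)
  let f : Quot (TwistedConj (δ : (Fin (n + 1) → W₁) → (Fin (n + 1) → W₁))) →
      Quot (TwistedConj (τ : W₁ → W₁)) :=
    Quot.map (fun w => (List.ofFn w).prod) fun w v h => (key w v).1 h
  have hf : Function.Bijective f := by
    constructor
    · rintro ⟨w⟩ ⟨v⟩ h
      exact Quot.sound ((key w v).2 ((TwistedConj.equivalence τ).quot_mk_eq_iff _ _ |>.1 h))
    · rintro ⟨g⟩
      exact ⟨Quot.mk _ (Fin.cons g fun _ => 1), congrArg (Quot.mk _) (by simp)⟩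
  exact ⟨Equiv.ofBijective f hf, fun w => rfl⟩
end

section
/- Let F be a field, n ≥ 1, and let g ∈ SL(n, F) be a monomial matrix whose permutation σ is an n-cycle (a cycle whose support is all of Fin n). Then g^n = (−1)^{n+1} • 1. Moreover, if char F ≠ 2, then the order of g equals n when n is odd and equals 2n when n is even. -/
open Matrix

/-- A matrix is monomial with permutation `σ` if its nonzero entries are exactly the
entries `(σ j, j)`, each of which is a unit. -/
def IsMonomial {n : Type*} [Fintype n] [DecidableEq n] {F : Type*} [Field F]
    (g : Matrix n n F) (σ : Equiv.Perm n) : Prop :=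
  ∃ c : n → Fˣ, ∀ i j, g i j = if i = σ j then (c j : F) else 0

section Monomial

variable {ι : Type*} [Fintype ι] [DecidableEq ι] {F : Type*} [Field F]

/-- The entries of the powers of a monomial matrix. -/
theorem monomial_pow_apply {g : Matrix ι ι F} {σ : Equiv.Perm ι} {c : ι → F}
    (hg : ∀ i j, g i j = if i = σ j then c j else 0) (k : ℕ) (i j : ι) :
    (g ^ k) i j = if i = (σ ^ k) j then ∏ t ∈ Finset.range k, c ((σ ^ t) j) else 0 := by
  induction k generalizing i with
  | zero => simp [Matrix.one_apply]
  | succ k ih =>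
    simp only [pow_succ' g, Matrix.mul_apply, ih, mul_ite, mul_zero, Finset.sum_ite_eq',
      Finset.mem_univ, if_true]
    rw [hg, pow_succ' σ, Equiv.Perm.mul_apply, Finset.prod_range_succ, ite_mul, zero_mul, mul_comm]

/-- The determinant of a monomial matrix. -/
theorem det_monomial {g : Matrix ι ι F} {σ : Equiv.Perm ι} {c : ι → F}
    (hg : ∀ i j, g i j = if i = σ j then c j else 0) :
    g.det = Equiv.Perm.sign σ * ∏ i, c i := by
  have h : g.submatrix σ id = diagonal c := by
    ext i j
    by_cases hij : i = j <;> simp [hg, hij]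
  have hdet := det_permute σ g
  rw [h, det_diagonal] at hdet
  rw [hdet, ← mul_assoc, ← Int.cast_mul, Int.units_coe_mul_self, Int.cast_one, one_mul]

end Monomial

section IsCycleOn

variable {ι : Type*} [Fintype ι] {σ : Equiv.Perm ι}

theorem Equiv.Perm.IsCycleOn.pow_apply_eq_self_iff (hσ : σ.IsCycleOn _root_.Set.univ)
    {k : ℕ} {a : ι} : (σ ^ k) a = a ↔ Fintype.card ι ∣ k := by
  rw [← Finset.coe_univ] at hσ
  exact hσ.pow_apply_eq (Finset.mem_univ a)

theorem Equiv.Perm.IsCycleOn.prod_range_card {M : Type*} [CommMonoid M]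
    (hσ : σ.IsCycleOn _root_.Set.univ) (c : ι → M) (a : ι) :
    ∏ t ∈ Finset.range (Fintype.card ι), c ((σ ^ t) a) = ∏ i, c i := by
  rw [← Finset.coe_univ] at hσ
  refine Finset.prod_bij (fun t _ => (σ ^ t) a) (fun _ _ => Finset.mem_univ _) ?_ ?_
    fun _ _ => rfl
  · intro s hs t ht hst
    exact ((hσ.pow_apply_eq_pow_apply (Finset.mem_univ a)).1 hst).eq_of_lt_of_lt
      (Finset.mem_range.1 hs) (Finset.mem_range.1 ht)
  · intro b _
    obtain ⟨t, ht, rfl⟩ := hσ.exists_pow_eq (Finset.mem_univ a) (Finset.mem_univ b)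
    exact ⟨t, Finset.mem_range.2 ht, rfl⟩

theorem Equiv.Perm.IsCycleOn.sign_eq_neg_one_pow_card [DecidableEq ι] [Nonempty ι]
    (hσ : σ.IsCycleOn _root_.Set.univ) :
    Equiv.Perm.sign σ = (-1) ^ (Fintype.card ι + 1) := by
  cases subsingleton_or_nontrivial ι with
  | inl _ =>
    have hcard : Fintype.card ι = 1 :=
      le_antisymm (Fintype.card_le_one_iff_subsingleton.2 ‹_›) Fintype.card_pos
    simp [Subsingleton.elim σ 1, hcard]
  | inr _ =>
    have hcycle : σ.IsCycle :=
      Equiv.Perm.isCycle_iff_exists_isCycleOn.2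
        ⟨_, Set.nontrivial_univ, hσ, fun _ _ => Set.mem_univ _⟩
    have hsupp : σ.support = Finset.univ := Finset.eq_univ_of_forall fun x =>
      Equiv.Perm.mem_support.2 (hσ.apply_ne Set.nontrivial_univ (Set.mem_univ x))
    rw [hcycle.sign, hsupp, Finset.card_univ, pow_succ, mul_neg_one]

end IsCycleOn

/-- A monomial matrix in `SL(n,F)` whose permutation is an `n`-cycle satisfies
`g ^ n = (-1)^(n+1) • 1`; if moreover `char F ≠ 2` its order is `n` for `n` odd and
`2n` for `n` even. -/
theorem stmt_3 (F : Type*) [Field F] (n : ℕ) (hn : 1 ≤ n)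
    (g : Matrix.SpecialLinearGroup (Fin n) F) (σ : Equiv.Perm (Fin n))
    (hmon : IsMonomial (g : Matrix (Fin n) (Fin n) F) σ)
    (hcyc : σ.IsCycleOn Set.univ) :
    (↑(g ^ n) : Matrix (Fin n) (Fin n) F) = (-1 : F) ^ (n + 1) • 1 ∧
      (ringChar F ≠ 2 → orderOf g = if Odd n then n else 2 * n) := by
  obtain ⟨c, hc⟩ := hmon
  have : Nonempty (Fin n) := ⟨⟨0, hn⟩⟩
  have hprod : ∏ i, (c i : F) = (-1) ^ (n + 1) := by
    have hdet := (det_monomial hc).symm.trans g.det_coe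
    rw [hcyc.sign_eq_neg_one_pow_card, Fintype.card_fin] at hdet
    push_cast at hdet
    have hsq : ((-1 : F) ^ (n + 1)) * (-1) ^ (n + 1) = 1 := by rw [← mul_pow]; simp
    exact mul_left_cancel₀ (pow_ne_zero _ (by simp)) (hdet.trans hsq.symm)
  have hpow : (g : Matrix (Fin n) (Fin n) F) ^ n = (-1 : F) ^ (n + 1) • 1 := by
    ext i j
    have hσ : (σ ^ n) j = j := hcyc.pow_apply_eq_self_iff.2 (by simp)
    have hrange := hcyc.prod_range_card (fun i => (c i : F)) j
    rw [Fintype.card_fin] at hrange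
    rw [monomial_pow_apply hc, hσ, hrange, hprod]
    simp [Matrix.one_apply]
  have hone (k : ℕ) : g ^ k = 1 ↔ (g : Matrix (Fin n) (Fin n) F) ^ k = 1 := by
    rw [← Matrix.SpecialLinearGroup.coe_pow, ← Matrix.SpecialLinearGroup.coe_one]
    exact Subtype.ext_iff
  have hdvd : n ∣ orderOf g := by
    have h := (hone _).1 (pow_orderOf_eq_one g)
    have hentry := congrFun (congrFun h ⟨0, hn⟩) ⟨0, hn⟩
    rw [monomial_pow_apply hc, Matrix.one_apply_eq] at hentry
    by_contra hnot
    rw [if_neg fun heq => hnot (by simpa using hcyc.pow_apply_eq_self_iff.1 heq.symm)] at hentry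
    exact zero_ne_one hentry
  refine ⟨(Matrix.SpecialLinearGroup.coe_pow g n).trans hpow, fun hchar => ?_⟩
  split_ifs with hodd
  · refine Nat.dvd_antisymm (orderOf_dvd_of_pow_eq_one ((hone n).2 ?_)) hdvd
    rw [hpow, hodd.add_one.neg_one_pow, one_smul]
  · rw [(Nat.not_odd_iff_even.1 hodd).add_one.neg_one_pow, neg_one_smul] at hpow
    obtain ⟨m, hm⟩ := hdvd
    have hm2 : m ∣ 2 := by
      refine Nat.dvd_of_mul_dvd_mul_left hn (hm ▸ orderOf_dvd_of_pow_eq_one ((hone _).2 ?_))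
      rw [pow_mul, hpow, neg_one_sq]
    rcases (Nat.dvd_prime Nat.prime_two).1 hm2 with rfl | rfl
    · rw [(hone n).1 (orderOf_dvd_iff_pow_eq_one.1 (by simp [hm]))] at hpow
      have hentry := congrFun (congrFun hpow ⟨0, hn⟩) ⟨0, hn⟩
      rw [Matrix.neg_apply, Matrix.one_apply_eq] at hentry
      exact absurd hentry.symm (Ring.neg_one_ne_one_of_char_ne_two hchar)
    · rw [hm, mul_comm]
end

section
/- Let F be a field with char F ≠ 2 and n ≥ 1. Let g ∈ Sp(2n, F) be a monomial matrix with permutation σ, and suppose every orbit of σ on the 2n indices is invariant under the involution τ exchanging i and i + n (indices taken mod 2n, i.e. τ swaps the two blocks of the symplectic basis). Then g^{k} ≠ 1 where k is the order of σ; in fact the order of g equals 2k. -/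
open Matrix

namespace IsMonomial

variable {ι : Type*} [Fintype ι] [DecidableEq ι] {F : Type*} [Field F]
  {g h : Matrix ι ι F} {σ π : Equiv.Perm ι}

theorem apply_ne_zero (hg : IsMonomial g σ) (j : ι) : g (σ j) j ≠ 0 := by
  obtain ⟨c, hc⟩ := hg
  simp [hc]

theorem apply_eq_zero (hg : IsMonomial g σ) {i j : ι} (hij : i ≠ σ j) : g i j = 0 := by
  obtain ⟨c, hc⟩ := hg
  simp [hc, hij]

theorem mul_apply (hh : IsMonomial h π) (g : Matrix ι ι F) (i j : ι) :
    (g * h) i j = g i (π j) * h (π j) j := by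
  rw [Matrix.mul_apply]
  exact Finset.sum_eq_single _ (fun k _ hk => by rw [hh.apply_eq_zero hk, mul_zero]) (by simp)

theorem one : IsMonomial (1 : Matrix ι ι F) 1 :=
  ⟨1, fun i j => by by_cases hij : i = j <;> simp [Matrix.one_apply, hij]⟩

theorem mul (hg : IsMonomial g σ) (hh : IsMonomial h π) : IsMonomial (g * h) (σ * π) := by
  refine ⟨fun j => Units.mk0 (g (σ (π j)) (π j)) (hg.apply_ne_zero _) *
    Units.mk0 (h (π j) j) (hh.apply_ne_zero _), fun i j => ?_⟩
  rw [hh.mul_apply]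
  split_ifs with hij
  · simp [hij]
  · rw [hg.apply_eq_zero hij, zero_mul]

theorem pow (hg : IsMonomial g σ) (m : ℕ) : IsMonomial (g ^ m) (σ ^ m) := by
  induction m with
  | zero => simpa using one
  | succ m ih => rw [pow_succ, pow_succ]; exact ih.mul hg

theorem perm_eq_one (hg : IsMonomial (1 : Matrix ι ι F) σ) : σ = 1 := by
  ext j
  by_contra hj
  exact hg.apply_ne_zero j (Matrix.one_apply_ne hj)

/-- The diagonal of a diagonal matrix commuting with a monomial matrix is constant along the
orbits of the permutation. -/
theorem apply_self_eq_of_sameCycle (hg : IsMonomial g σ) (hh : IsMonomial h 1)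
    (hcomm : Commute g h) {i j : ι} (hij : σ.SameCycle i j) : h i i = h j j := by
  have step (i : ι) : h (σ i) (σ i) = h i i := by
    have key := congrFun (congrFun hcomm.eq (σ i)) i
    rw [hh.mul_apply, hg.mul_apply, Equiv.Perm.one_apply, mul_comm] at key
    exact (mul_right_cancel₀ (hg.apply_ne_zero i) key).symm
  obtain ⟨a, rfl⟩ := hij.exists_nat_pow_eq
  clear hij
  induction a with
  | zero => simp
  | succ a ih => rw [pow_succ', Equiv.Perm.mul_apply, step, ih]

end IsMonomial

namespace Matrix

variable {l R : Type*} [DecidableEq l] [CommRing R]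

theorem J_apply_eq_zero {i j : l ⊕ l} (hij : j ≠ i.swap) : J l R i j = 0 := by
  rcases i with i | i <;> rcases j with j | j <;> simp [J, Matrix.one_apply] at hij ⊢ <;> tauto

theorem J_apply_swap_ne_zero [Nontrivial R] (i : l ⊕ l) : J l R i i.swap ≠ 0 := by
  rcases i with i | i <;> simp [J]

theorem J_swap_apply (i : l ⊕ l) : J l R i.swap i = -J l R i i.swap := by
  rcases i with i | i <;> simp [J]

end Matrix

section Symplectic

variable {l F : Type*} [DecidableEq l] [Fintype l] [Field F]
  {g : Matrix (l ⊕ l) (l ⊕ l) F} {σ : Equiv.Perm (l ⊕ l)}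

namespace IsMonomial

theorem mul_J_mul (hg : IsMonomial g σ) (hs : g ∈ symplecticGroup l F) (i j : l ⊕ l) :
    g (σ i) i * J l F (σ i) (σ j) * g (σ j) j = J l F i j := by
  have key := congrFun (congrFun (SymplecticGroup.mem_iff'.mp hs) i) j
  rw [hg.mul_apply, Matrix.mul_apply,
    Finset.sum_eq_single (σ i) (fun k _ hk => by
      rw [Matrix.transpose_apply, hg.apply_eq_zero hk, zero_mul]) (by simp)] at key
  exact key

theorem perm_swap (hg : IsMonomial g σ) (hs : g ∈ symplecticGroup l F) (i : l ⊕ l) :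
    σ i.swap = (σ i).swap := by
  by_contra hne
  refine J_apply_swap_ne_zero (R := F) i ?_
  rw [← hg.mul_J_mul hs, J_apply_eq_zero hne, mul_zero, zero_mul]

theorem apply_mul_apply_swap (hg : IsMonomial g 1) (hs : g ∈ symplecticGroup l F) (i : l ⊕ l) :
    g i i * g i.swap i.swap = 1 := by
  have key := hg.mul_J_mul hs i i.swap
  simp only [Equiv.Perm.one_apply] at key
  refine mul_right_cancel₀ (J_apply_swap_ne_zero (R := F) i) ?_
  linear_combination key

/-- If the permutation of a symplectic monomial matrix `g` maps `i` to its dual index, then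
`g ^ 2` acts on the `i`-th basis vector as `-1`. -/
theorem sq_apply_self_of_perm_eq_swap (hg : IsMonomial g σ) (hs : g ∈ symplecticGroup l F)
    {i : l ⊕ l} (hi : σ i = i.swap) : (g ^ 2) i i = -1 := by
  have hi' : σ i.swap = i := by rw [hg.perm_swap hs, hi, Sum.swap_swap]
  have key := hg.mul_J_mul hs i i.swap
  rw [hi, hi', J_swap_apply] at key
  rw [sq, hg.mul_apply, hi]
  refine mul_right_cancel₀ (J_apply_swap_ne_zero (R := F) i) ?_
  linear_combination -key

end IsMonomial

end Symplectic

theorem Nat.dvd_add_of_dvd_two_mul {p a b : ℕ} (ha : p ∣ 2 * a) (hb : p ∣ 2 * b)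
    (ha' : ¬p ∣ a) (hb' : ¬p ∣ b) : p ∣ a + b := by
  obtain ⟨u, hu⟩ := ha
  obtain ⟨v, hv⟩ := hb
  have odd_of {c w : ℕ} (hw : 2 * c = p * w) (hc : ¬p ∣ c) : Odd w := by
    by_contra hw'
    obtain ⟨t, rfl⟩ := Nat.not_odd_iff_even.mp hw'
    exact hc ⟨t, by linarith⟩
  obtain ⟨t, ht⟩ := (odd_of hu ha').add_odd (odd_of hv hb')
  refine ⟨t, ?_⟩
  have : p * (u + v) = p * (t + t) := by rw [ht]
  linarith

namespace Equiv.Perm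

theorem pow_apply_eq_self_iff_minimalPeriod_dvd {α : Type*} (σ : Perm α) (i : α) (m : ℕ) :
    (σ ^ m) i = i ↔ Function.minimalPeriod σ i ∣ m := by
  rw [← Function.isPeriodicPt_iff_minimalPeriod_dvd, Function.IsPeriodicPt,
    Function.IsFixedPt, iterate_eq_pow]

variable {l : Type*} [Finite l] {σ : Perm (l ⊕ l)}

/-- If `σ` commutes with the block swap and all its orbits are swap-invariant, then its order is
even and the power of `σ` of exponent half its order maps some index to its dual index. -/
theorem exists_orderOf_eq_two_mul_and_pow_apply_eq_swap [Nonempty l]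
    (hcomm : ∀ i, σ i.swap = (σ i).swap) (hτ : ∀ i, σ.SameCycle i i.swap) :
    ∃ m i, orderOf σ = 2 * m ∧ (σ ^ m) i = i.swap := by
  have hcomm' (m : ℕ) (i : l ⊕ l) : (σ ^ m) i.swap = ((σ ^ m) i).swap := by
    induction m with
    | zero => simp
    | succ m ih => rw [pow_succ', mul_apply, mul_apply, ih, hcomm]
  have hswap (i : l ⊕ l) : i.swap ≠ i := by rcases i with i | i <;> simp
  have hhalf (i : l ⊕ l) : ∃ a : ℕ, (σ ^ a) i = i.swap ∧
      Function.minimalPeriod σ i ∣ 2 * a ∧ ¬Function.minimalPeriod σ i ∣ a := by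
    obtain ⟨a, ha⟩ := (hτ i).exists_nat_pow_eq
    refine ⟨a, ha, ?_, ?_⟩ <;> rw [← pow_apply_eq_self_iff_minimalPeriod_dvd]
    · rw [two_mul, pow_add, mul_apply, ha, hcomm', ha, Sum.swap_swap]
    · rw [ha]
      exact hswap i
  have hdvd (i : l ⊕ l) : Function.minimalPeriod σ i ∣ orderOf σ := by
    rw [← pow_apply_eq_self_iff_minimalPeriod_dvd, pow_orderOf_eq_one, one_apply]
  obtain ⟨x⟩ := ‹Nonempty l›
  have heven : Even (orderOf σ) := by
    by_contra hodd
    obtain ⟨a, -, ha, ha'⟩ := hhalf (Sum.inl x)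
    refine ha' (Nat.Coprime.dvd_of_dvd_mul_left ?_ ha)
    exact ((Nat.not_even_iff_odd.mp hodd).of_dvd_nat (hdvd _)).coprime_two_right
  obtain ⟨m, hm⟩ := heven.two_dvd
  have hpos : 0 < orderOf σ := orderOf_pos σ
  have hne : σ ^ m ≠ 1 := pow_ne_one_of_lt_orderOf (by lia) (by lia)
  obtain ⟨i, hi⟩ : ∃ i, (σ ^ m) i ≠ i := by
    by_contra! hfix
    exact hne (Equiv.ext hfix)
  obtain ⟨a, ha, hpa, hpa'⟩ := hhalf i
  refine ⟨m, i, hm, ?_⟩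
  have hpm := Nat.dvd_add_of_dvd_two_mul (hm ▸ hdvd i) hpa
    (mt (pow_apply_eq_self_iff_minimalPeriod_dvd σ i m).mpr hi) hpa'
  rw [← pow_apply_eq_self_iff_minimalPeriod_dvd, pow_add, mul_apply, ha, hcomm'] at hpm
  rw [← Sum.swap_swap ((σ ^ m) i), hpm]

end Equiv.Perm

/-- If `char F ≠ 2` and `g ∈ Sp(2n,F)` is monomial with all permutation orbits invariant
under the swap of the two blocks, then `g ^ k ≠ 1` where `k` is the order of the
permutation; in fact the order of `g` is `2k`. -/
theorem stmt_10 (F : Type*) [Field F] (hF : ringChar F ≠ 2) (n : ℕ) (hn : 1 ≤ n)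
    (g : Matrix.symplecticGroup (Fin n) F) (σ : Equiv.Perm (Fin n ⊕ Fin n))
    (hmon : IsMonomial (g : Matrix (Fin n ⊕ Fin n) (Fin n ⊕ Fin n) F) σ)
    (hτ : ∀ i : Fin n ⊕ Fin n, σ.SameCycle i (Equiv.sumComm (Fin n) (Fin n) i)) :
    g ^ orderOf σ ≠ 1 ∧ orderOf g = 2 * orderOf σ := by
  have : Nonempty (Fin n) := ⟨⟨0, hn⟩⟩
  have hcoe (m : ℕ) : g ^ m = 1 ↔ (g : Matrix (Fin n ⊕ Fin n) (Fin n ⊕ Fin n) F) ^ m = 1 := by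
    rw [← SubmonoidClass.coe_pow, OneMemClass.coe_eq_one]
  have hne : g ^ orderOf σ ≠ 1 := by
    obtain ⟨m, i, hm, hi⟩ :=
      Equiv.Perm.exists_orderOf_eq_two_mul_and_pow_apply_eq_swap (hmon.perm_swap g.2) hτ
    intro h
    have hneg := (hmon.pow m).sq_apply_self_of_perm_eq_swap (pow_mem g.2 m) hi
    rw [← pow_mul, mul_comm, ← hm, (hcoe _).mp h, Matrix.one_apply_eq] at hneg
    exact Ring.neg_one_ne_one_of_char_ne_two hF hneg.symm
  have hdiag := hmon.pow (orderOf σ)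
  rw [pow_orderOf_eq_one] at hdiag
  have htwo : g ^ (2 * orderOf σ) = 1 := by
    rw [hcoe, mul_comm, pow_mul, sq]
    ext i j
    rw [hdiag.mul_apply, Equiv.Perm.one_apply]
    by_cases hij : i = j
    · subst hij
      have hconst := hmon.apply_self_eq_of_sameCycle hdiag (Commute.self_pow _ _) (hτ i)
      have hinv := hdiag.apply_mul_apply_swap (pow_mem g.2 _) i
      rw [Matrix.one_apply_eq, ← hinv]
      exact congrArg _ hconst
    · rw [hdiag.apply_eq_zero hij, zero_mul, Matrix.one_apply_ne hij]
  refine ⟨hne, ?_⟩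
  have hdvd : orderOf σ ∣ orderOf g := by
    have hperm := hmon.pow (orderOf g)
    rw [(hcoe _).mp (pow_orderOf_eq_one g)] at hperm
    exact orderOf_dvd_of_pow_eq_one hperm.perm_eq_one
  obtain ⟨q, hq⟩ := hdvd
  have hq2 : q ∣ 2 := by
    refine Nat.dvd_of_mul_dvd_mul_left (orderOf_pos σ) ?_
    rw [← hq, mul_comm]
    exact orderOf_dvd_of_pow_eq_one htwo
  rcases (Nat.dvd_prime Nat.prime_two).mp hq2 with rfl | rfl
  · rw [mul_one] at hq
    exact absurd (hq ▸ pow_orderOf_eq_one g) hne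
  · rw [hq, mul_comm]
end

section
/- Let F be an infinite field and n ≥ 1. Let T be the subgroup of diagonal matrices lying in Sp(2n, F), and suppose g ∈ Sp(2n, F) satisfies g * t * g⁻¹ = t⁻¹ for every t ∈ T. Then g² = −1; in particular, if char F ≠ 2, every such g has order 4. -/
open Matrix

private lemma isDiag_mul' {n F : Type*} [Fintype n] [DecidableEq n] [Field F]
    {A B : Matrix n n F} (hA : A.IsDiag) (hB : B.IsDiag) : (A * B).IsDiag := by
  intro i j hij
  rw [Matrix.mul_apply]
  apply Finset.sum_eq_zero
  intro k _
  rcases eq_or_ne i k with rfl | h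
  · rw [hB hij, mul_zero]
  · rw [hA h, zero_mul]

private lemma isDiag_of_mul_eq_one {n F : Type*} [Fintype n] [DecidableEq n] [Field F]
    {A B : Matrix n n F} (hA : A.IsDiag) (h : A * B = 1) : B.IsDiag := by
  intro i j hij
  have key : ∀ j', (A * B) i j' = A i i * B i j' := by
    intro j'
    rw [Matrix.mul_apply]
    rw [Finset.sum_eq_single i]
    · intro k _ hk; rw [hA (Ne.symm hk), zero_mul]
    · intro hi; exact absurd (Finset.mem_univ i) hi
  have h1 : A i i * B i i = 1 := by
    have := key i; rw [h, Matrix.one_apply_eq] at this; exact this.symm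
  have h0 : A i i * B i j = 0 := by
    have := key j; rw [h, Matrix.one_apply_ne hij] at this; exact this.symm
  exact (mul_eq_zero.mp h0).resolve_left (left_ne_zero_of_mul_eq_one h1)

/-- The subgroup of diagonal matrices in `Sp(2n, F)`. -/
def diagSp (n : ℕ) (F : Type*) [Field F] :
    Subgroup ↥(Matrix.symplecticGroup (Fin n) F) where
  carrier := {g | (g : Matrix (Fin n ⊕ Fin n) (Fin n ⊕ Fin n) F).IsDiag}
  one_mem' := Matrix.isDiag_one
  mul_mem' {a b} ha hb := isDiag_mul' ha hb
  inv_mem' {a} ha := by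
    have h : (a : Matrix (Fin n ⊕ Fin n) (Fin n ⊕ Fin n) F) *
        ((a⁻¹ : _) : Matrix (Fin n ⊕ Fin n) (Fin n ⊕ Fin n) F) = 1 :=
      congrArg Subtype.val (mul_inv_cancel a)
    exact isDiag_of_mul_eq_one ha h

namespace SymplecticGroup

/-- The diagonal symplectic matrix with diagonal blocks `diagonal d` and `diagonal d⁻¹`. -/
def diagonalTorus {n : ℕ} {F : Type*} [Field F] (d : Fin n → F) (hd : ∀ i, d i ≠ 0) :
    ↥(Matrix.symplecticGroup (Fin n) F) :=
  ⟨fromBlocks (diagonal d) 0 0 (diagonal d⁻¹), by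
    rw [fromBlocks_mem_iff]
    simp [hd, ← diagonal_one]⟩

lemma coe_diagonalTorus {n : ℕ} {F : Type*} [Field F] (d : Fin n → F) (hd : ∀ i, d i ≠ 0) :
    (diagonalTorus d hd : Matrix (Fin n ⊕ Fin n) (Fin n ⊕ Fin n) F) =
      diagonal (Sum.elim d d⁻¹) :=
  fromBlocks_diagonal d d⁻¹

lemma diagonalTorus_mem_diagSp {n : ℕ} {F : Type*} [Field F] (d : Fin n → F)
    (hd : ∀ i, d i ≠ 0) : diagonalTorus d hd ∈ diagSp n F := by
  change Matrix.IsDiag _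
  rw [coe_diagonalTorus]
  exact isDiag_diagonal _

/-- A nonzero entry of an element inverting the diagonal torus lies at a position `(i, j)` where
the weights `i` and `j` of the torus are opposite. -/
lemma mul_eq_one_of_apply_ne_zero {n : ℕ} {F : Type*} [Field F]
    {g : ↥(Matrix.symplecticGroup (Fin n) F)} (hg : ∀ t ∈ diagSp n F, g * t * g⁻¹ = t⁻¹)
    {i j : Fin n ⊕ Fin n} (hij : (g : Matrix (Fin n ⊕ Fin n) (Fin n ⊕ Fin n) F) i j ≠ 0)
    (d : Fin n → F) (hd : ∀ k, d k ≠ 0) :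
    Sum.elim d d⁻¹ i * Sum.elim d d⁻¹ j = 1 := by
  have h := hg _ (diagonalTorus_mem_diagSp d hd)
  have h' : diagonalTorus d hd * g * diagonalTorus d hd = g := by
    rw [mul_inv_eq_iff_eq_mul] at h
    rw [mul_assoc, h, mul_inv_cancel_left]
  have e := congrFun₂ (congrArg Subtype.val h') i j
  simp only [Submonoid.coe_mul, coe_diagonalTorus, mul_diagonal, diagonal_mul] at e
  exact mul_right_cancel₀ hij (by linear_combination e)

lemma eq_swap_of_apply_ne_zero {n : ℕ} {F : Type*} [Field F] [Infinite F]
    {g : ↥(Matrix.symplecticGroup (Fin n) F)} (hg : ∀ t ∈ diagSp n F, g * t * g⁻¹ = t⁻¹)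
    {i j : Fin n ⊕ Fin n} (hij : (g : Matrix (Fin n ⊕ Fin n) (Fin n ⊕ Fin n) F) i j ≠ 0) :
    j = i.swap := by
  classical
  obtain ⟨x, hx⟩ := Infinite.exists_notMem_finset ({0, 1, -1} : Finset F)
  simp only [Finset.mem_insert, Finset.mem_singleton, not_or] at hx
  obtain ⟨h0, h1, h2⟩ := hx
  have hxx : x * x ≠ 1 := fun h => (mul_self_eq_one_iff.mp h).elim h1 h2
  have hxx' : x⁻¹ * x⁻¹ ≠ 1 := by rwa [← mul_inv, ne_eq, inv_eq_one]
  have key (a : Fin n) := mul_eq_one_of_apply_ne_zero hg hij (Function.update 1 a x) (by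
    intro k
    rcases eq_or_ne k a with rfl | hk <;> simp [*])
  rcases i with a | a <;> rcases j with b | b <;> specialize key a <;>
    rcases eq_or_ne b a with rfl | hb <;> simp_all

end SymplecticGroup

/-- If `g ∈ Sp(2n,F)` (`F` infinite) conjugates every diagonal symplectic matrix to its
inverse, then `g ^ 2 = -1`; in particular, if `char F ≠ 2`, `g` has order `4`. -/
theorem stmt_16 (F : Type*) [Field F] [Infinite F] (n : ℕ) (hn : 1 ≤ n)
    (g : ↥(Matrix.symplecticGroup (Fin n) F))
    (hg : ∀ t ∈ diagSp n F, g * t * g⁻¹ = t⁻¹) :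
    (↑(g ^ 2) : Matrix (Fin n ⊕ Fin n) (Fin n ⊕ Fin n) F) = -1 ∧
      (ringChar F ≠ 2 → orderOf g = 4) := by
  have hoff {i j : Fin n ⊕ Fin n} (h : j ≠ i.swap) :
      (g : Matrix (Fin n ⊕ Fin n) (Fin n ⊕ Fin n) F) i j = 0 :=
    by_contra fun h' => h (SymplecticGroup.eq_swap_of_apply_ne_zero hg h')
  obtain ⟨M, hM⟩ := g
  have hA : M.toBlocks₁₁ = 0 := by ext a b; exact hoff (by simp)
  have hD : M.toBlocks₂₂ = 0 := by ext a b; exact hoff (by simp)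
  have hC : M.toBlocks₂₁ᵀ = M.toBlocks₂₁ :=
    IsDiag.isSymm fun a b hab => hoff (by simpa using hab.symm)
  have hblocks := M.fromBlocks_toBlocks
  rw [hA, hD] at hblocks
  have hCB : M.toBlocks₂₁ * -M.toBlocks₁₂ = 1 := by
    have h := hM
    rw [← hblocks, SymplecticGroup.fromBlocks_mem_iff, hC] at h
    simpa using h.2.2
  have hBC := mul_eq_one_comm.mp hCB
  have hsq : M ^ 2 = -1 := by
    rw [mul_neg, neg_eq_iff_eq_neg] at hCB
    rw [neg_mul, neg_eq_iff_eq_neg] at hBC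
    rw [← hblocks, sq, fromBlocks_multiply, ← fromBlocks_one, fromBlocks_neg]
    simp [hCB, hBC]
  refine ⟨hsq, fun hchar => ?_⟩
  refine orderOf_eq_prime_pow (p := 2) (n := 1) (fun h => ?_) (Subtype.ext ?_)
  · have h1 : (-1 : Matrix (Fin n ⊕ Fin n) (Fin n ⊕ Fin n) F) = 1 :=
      hsq.symm.trans (congrArg Subtype.val h)
    have h2 := congrFun₂ h1 (Sum.inl ⟨0, hn⟩) (Sum.inl ⟨0, hn⟩)
    rw [neg_apply, one_apply_eq] at h2
    exact Ring.neg_one_ne_one_of_char_ne_two hchar h2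
  · change M ^ (2 * 2) = 1
    rw [pow_mul, hsq, neg_one_sq]
end
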